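/- For every τ in the complex upper half plane, f_{1,0}(τ)·f_{1,1}(τ) = E₄(τ); moreover f_{1,j}(((−1)ʲ + i√3)/2) = 0 for j ∈ {0,1}. -/

import Mathlib

open Complex

/-- `q = exp(2πiτ)`. -/
noncomputable def qq (τ : ℂ) : ℂ := Complex.exp (2 * Real.pi * Complex.I * τ)

/-- `σ_k(n) = Σ_{d ∣ n} d^k`, as a complex number. -/
noncomputable def sigmaC (k n : ℕ) : ℂ := ∑ d ∈ n.divisors, (d : ℂ) ^ k

/-- Eisenstein series `E₂(τ) = 1 - 24 Σ_{n≥1} σ₁(n) qⁿ`. -/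
noncomputable def E₂ (τ : ℂ) : ℂ := 1 - 24 * ∑' n : ℕ, sigmaC 1 (n + 1) * qq τ ^ (n + 1)

/-- Eisenstein series `E₄(τ) = 1 + 240 Σ_{n≥1} σ₃(n) qⁿ`. -/
noncomputable def E₄ (τ : ℂ) : ℂ := 1 + 240 * ∑' n : ℕ, sigmaC 3 (n + 1) * qq τ ^ (n + 1)

/-- Eisenstein series `E₆(τ) = 1 - 504 Σ_{n≥1} σ₅(n) qⁿ`. -/
noncomputable def E₆ (τ : ℂ) : ℂ := 1 - 504 * ∑' n : ℕ, sigmaC 5 (n + 1) * qq τ ^ (n + 1)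

/-- Dedekind eta function `η(τ) = exp(πiτ/12) ∏_{n≥1} (1 - qⁿ)`. -/
noncomputable def η (τ : ℂ) : ℂ :=
  Complex.exp (Real.pi * Complex.I * τ / 12) * ∏' n : ℕ, (1 - qq τ ^ (n + 1))

/-- Theta function `θ(τ) = Σ_{n ∈ ℤ} q^{n²}`. -/
noncomputable def θ (τ : ℂ) : ℂ := ∑' n : ℤ, qq τ ^ (n ^ 2)

/-- The character `χ₋₄`: `χ₋₄(d) = 1, -1, 0` according as `d ≡ 1, 3, 0/2 (mod 4)`. -/
noncomputable def χ₄ (d : ℕ) : ℂ := if d % 4 = 1 then 1 else if d % 4 = 3 then -1 else 0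

/-- The character `χ₋₃`: `χ₋₃(d) = 1, -1, 0` according as `d ≡ 1, 2, 0 (mod 3)`. -/
noncomputable def χ₃ (d : ℕ) : ℂ := if d % 3 = 1 then 1 else if d % 3 = 2 then -1 else 0

/-- `E_{1,-4}(τ) = 1/4 + Σ_{n≥1} (Σ_{d∣n} χ₋₄(d)) qⁿ`. -/
noncomputable def E₁₄ (τ : ℂ) : ℂ :=
  1 / 4 + ∑' n : ℕ, (∑ d ∈ (n + 1).divisors, χ₄ d) * qq τ ^ (n + 1)

/-- `E_{1,-3}(τ) = 1/6 + Σ_{n≥1} (Σ_{d∣n} χ₋₃(d)) qⁿ`. -/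
noncomputable def E₁₃ (τ : ℂ) : ℂ :=
  1 / 6 + ∑' n : ℕ, (∑ d ∈ (n + 1).divisors, χ₃ d) * qq τ ^ (n + 1)

/-- `E_{2,2}(τ) = 2E₂(2τ) - E₂(τ)`. -/
noncomputable def E₂₂ (τ : ℂ) : ℂ := 2 * E₂ (2 * τ) - E₂ τ

/-- `E_{2,4}(τ) = (4E₄(2τ) - E₄(τ))/3`. -/
noncomputable def E₂₄ (τ : ℂ) : ℂ := (4 * E₄ (2 * τ) - E₄ τ) / 3

/-- `E_{3,2}(τ) = (3E₂(3τ) - E₂(τ))/2`. -/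
noncomputable def E₃₂ (τ : ℂ) : ℂ := (3 * E₂ (3 * τ) - E₂ τ) / 2

/-- `E_{3,4}(τ) = (9E₄(3τ) - E₄(τ))/8`. -/
noncomputable def E₃₄ (τ : ℂ) : ℂ := (9 * E₄ (3 * τ) - E₄ τ) / 8

/-- `E_{4,2}(τ) = (4E₂(4τ) - E₂(τ))/3`. -/
noncomputable def E₄₂ (τ : ℂ) : ℂ := (4 * E₂ (4 * τ) - E₂ τ) / 3

/-- `E'_{4,2}(τ) = 4E₂(4τ) - 4E₂(2τ) + E₂(τ)`. -/
noncomputable def E₄₂' (τ : ℂ) : ℂ := 4 * E₂ (4 * τ) - 4 * E₂ (2 * τ) + E₂ τ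

/-- `f_{1,j}(τ) = 2E₂(τ) - ((3+(-1)ʲi√3)/6)E₂(τ/2) - ((3-(-1)ʲi√3)/6)E₂((τ+1)/2)`. -/
noncomputable def f₁ (j : ℕ) (τ : ℂ) : ℂ :=
  2 * E₂ τ - ((3 + (-1 : ℂ) ^ j * Complex.I * Real.sqrt 3) / 6) * E₂ (τ / 2)
    - ((3 - (-1 : ℂ) ^ j * Complex.I * Real.sqrt 3) / 6) * E₂ ((τ + 1) / 2)

/-- `g_{1,j}(τ) = (3/2)E₂(τ) - (1/4) Σ_{0≤m≤2, m≢j (mod 3)} E₂((τ+m)/3)`. -/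
noncomputable def g₁ (j : ℕ) (τ : ℂ) : ℂ :=
  (3 / 2) * E₂ τ -
    (1 / 4) * ∑ m ∈ (Finset.range 3).filter (fun m => ¬ m % 3 = j % 3), E₂ ((τ + m) / 3)

/-- `f_{2,j}(τ) = 4E_{1,-4}(τ) + (-1)ʲ·2i·(E_{1,-4}(τ/2) - E_{1,-4}((τ+1)/2))`. -/
noncomputable def f₂ (j : ℕ) (τ : ℂ) : ℂ :=
  4 * E₁₄ τ + (-1 : ℂ) ^ j * 2 * Complex.I * (E₁₄ (τ / 2) - E₁₄ ((τ + 1) / 2))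

/-- `f_{3,j}(τ) = 6E_{1,-3}(2τ) + (-1)ʲ·i√3·(E_{1,-3}(τ/2) - E_{1,-3}((τ+1)/2))`. -/
noncomputable def f₃ (j : ℕ) (τ : ℂ) : ℂ :=
  6 * E₁₃ (2 * τ) +
    (-1 : ℂ) ^ j * Complex.I * Real.sqrt 3 * (E₁₃ (τ / 2) - E₁₃ ((τ + 1) / 2))

/-- `f_{4,j}(τ) = θ(τ/2 - (-1)ʲ/4)`. -/
noncomputable def f₄ (j : ℕ) (τ : ℂ) : ℂ := θ (τ / 2 - (-1 : ℂ) ^ j / 4)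

/-- `g_{4,j}(τ) = 2θ(2τ)² - θ((τ+j)/2)²`. -/
noncomputable def g₄ (j : ℕ) (τ : ℂ) : ℂ := 2 * θ (2 * τ) ^ 2 - θ ((τ + j) / 2) ^ 2

/-- `E_{3,-3,1}(τ) = -1/9 + Σ_{n≥1} (Σ_{d∣n} d²χ₋₃(d)) qⁿ`. -/
noncomputable def E₃₃₁ (τ : ℂ) : ℂ :=
  -(1 / 9) + ∑' n : ℕ, (∑ d ∈ (n + 1).divisors, (d : ℂ) ^ 2 * χ₃ d) * qq τ ^ (n + 1)

/-- `E_{3,1,-3}(τ) = Σ_{n≥1} (Σ_{d∣n} d²χ₋₃(n/d)) qⁿ`. -/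
noncomputable def E₃₁₃ (τ : ℂ) : ℂ :=
  ∑' n : ℕ, (∑ d ∈ (n + 1).divisors, (d : ℂ) ^ 2 * χ₃ ((n + 1) / d)) * qq τ ^ (n + 1)

/-! Both claims come from how `f₁ 0` and `f₁ 1` behave under the generators of the modular group:
`τ ↦ τ + 1` swaps them, and `τ ↦ -1 / τ` swaps them up to the factor `τ ^ 2` and conjugate primitive
cube roots of unity. The second fact combines the quasimodularity of `E₂` with its eigenvalue
equation for the Hecke operator `T₂`. The cube roots cancel in the product `f₁ 0 * f₁ 1`, which is
therefore modular of weight four; it agrees with `E₄` at `i∞`, hence everywhere, as there are no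
cusp forms of weight less than twelve. At an elliptic point `ρ` of order three the two
transformation laws give `f₁ j ρ = ζ * f₁ j ρ` with `ζ ≠ 1`. -/

open UpperHalfPlane hiding I
open Filter Topology ModularGroup
open scoped MatrixGroups ModularForm

local notation "I∞" => comap Complex.im atTop

lemma eq_zero_of_weight_lt_twelve {k : ℤ} (hk : k < 12) {g : ℂ → ℂ}
    (hd : DifferentiableOn ℂ g upperHalfPlaneSet)
    (hT : ∀ τ : ℂ, 0 < τ.im → g (τ + 1) = g τ)
    (hS : ∀ τ : ℂ, 0 < τ.im → g (-1 / τ) = τ ^ k * g τ)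
    (h0 : Tendsto g I∞ (𝓝 0)) {τ : ℂ} (hτ : 0 < τ.im) : g τ = 0 := by
  have slash_S : (fun z : ℍ ↦ g z) ∣[k] S = fun z : ℍ ↦ g z := by
    ext z
    have hz : (z : ℂ) ^ k ≠ 0 := zpow_ne_zero k z.ne_zero
    have h := hS z z.im_pos
    rw [neg_div, one_div, ← inv_neg] at h
    rw [SlashInvariantForm.slash_S_apply, UpperHalfPlane.coe_mk, h, zpow_neg, mul_comm,
      inv_mul_cancel_left₀ hz]
  have slash_T : (fun z : ℍ ↦ g z) ∣[k] T = fun z : ℍ ↦ g z := by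
    ext z
    rw [ModularForm.SL_slash_apply, modular_T_smul, ModularGroup.denom_apply]
    simp [T, add_comm, hT z z.im_pos]
  have slash := SlashInvariantForm.slash_action_generators_SL2Z slash_S slash_T
  let f : CuspForm 𝒮ℒ k :=
    { toFun := fun z ↦ g z
      slash_action_eq' := fun _ ⟨γ, h⟩ ↦ h ▸ slash γ
      holo' := UpperHalfPlane.mdifferentiable_iff.mpr <|
        hd.congr fun z hz ↦ by simp [ofComplex_apply_of_im_pos hz]
      zero_at_cusps' := fun hc ↦ by
        rw [Subgroup.IsArithmetic.isCusp_iff_isCusp_SL2Z] at hc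
        refine (OnePoint.isZeroAt_iff_forall_SL2Z hc).mpr fun γ _ ↦ ?_
        rw [slash γ]
        exact h0.comp tendsto_coe_atImInfty }
  have hf : f = 0 :=
    rank_zero_iff_forall_zero.mp (CuspForm.rank_eq_zero_of_weight_lt_twelve hk) f
  exact DFunLike.congr_fun hf ⟨τ, hτ⟩

lemma qq_add_one (τ : ℂ) : qq (τ + 1) = qq τ := by
  simp [qq, mul_add, Complex.exp_add]

lemma norm_qq (τ : ℂ) : ‖qq τ‖ = Real.exp (-2 * Real.pi * τ.im) := by
  simp [qq, Complex.norm_exp]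

lemma norm_qq_le_of_im_le {τ τ' : ℂ} (h : τ'.im ≤ τ.im) : ‖qq τ‖ ≤ ‖qq τ'‖ := by
  rw [norm_qq, norm_qq, Real.exp_le_exp]
  nlinarith [Real.pi_pos]

lemma tendsto_qq : Tendsto qq I∞ (𝓝 0) := by
  refine ((Function.Periodic.qParam_tendsto one_pos).mono_right nhdsWithin_le_nhds).congr fun τ ↦ ?_
  simp [Function.Periodic.qParam, qq]

lemma tendsto_tsum_mul_qq_pow_succ {a : ℕ → ℂ} {τ₀ : ℂ}
    (ha : Summable fun n ↦ a n * qq τ₀ ^ (n + 1)) :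
    Tendsto (fun τ ↦ ∑' n, a n * qq τ ^ (n + 1)) I∞ (𝓝 0) := by
  rw [← tsum_zero (β := ℕ)]
  refine tendsto_tsum_of_dominated_convergence ha.norm (fun n ↦ ?_) ?_
  · simpa using (tendsto_qq.pow (n + 1)).const_mul (a n)
  · filter_upwards [preimage_mem_comap (Ici_mem_atTop τ₀.im)] with τ hτ n
    rw [norm_mul, norm_mul, norm_pow, norm_pow]
    gcongr
    exact norm_qq_le_of_im_le hτ

lemma sigmaC_eq_sigma (k n : ℕ) : sigmaC k n = (ArithmeticFunction.sigma k n : ℂ) := by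
  simp [sigmaC, ArithmeticFunction.sigma_apply]

lemma summable_sigmaC_mul_qq_pow_succ (k : ℕ) (z : ℍ) :
    Summable fun n ↦ sigmaC k (n + 1) * qq z ^ (n + 1) := by
  simpa [sigmaC_eq_sigma, qq] using (summable_nat_add_iff 1).mpr
    (EisensteinSeries.summable_sigma_mul_cexp_pow (k := k + 1) (by lia) z)

lemma tendsto_tsum_sigmaC (k : ℕ) :
    Tendsto (fun τ ↦ ∑' n : ℕ, sigmaC k (n + 1) * qq τ ^ (n + 1)) I∞ (𝓝 0) :=
  tendsto_tsum_mul_qq_pow_succ (summable_sigmaC_mul_qq_pow_succ k UpperHalfPlane.I)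

lemma E₂_coe (z : ℍ) : E₂ z = EisensteinSeries.E2 z := by
  rw [EisensteinSeries.E2_eq_tsum_cexp, E₂,
    tsum_pnat_eq_tsum_succ
      (f := fun n ↦ (ArithmeticFunction.sigma 1 n : ℂ) * cexp (2 * Real.pi * I * z) ^ n)]
  simp only [sigmaC_eq_sigma, qq]

lemma E₄_coe (z : ℍ) : E₄ z = ModularForm.E₄ z := by
  rw [EisensteinSeries.q_expansion_bernoulli _ ⟨2, rfl⟩, E₄,
    show bernoulli 4 = -1 / 30 by decide +kernel]
  simp only [zpow_natCast]
  rw [tsum_pnat_eq_tsum_succ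
    (f := fun n ↦ (ArithmeticFunction.sigma (4 - 1) n : ℂ) * cexp (2 * Real.pi * I * z) ^ n)]
  simp only [sigmaC_eq_sigma, qq]
  norm_num

lemma differentiableOn_E₂ : DifferentiableOn ℂ E₂ upperHalfPlaneSet :=
  (UpperHalfPlane.mdifferentiable_iff.mp E2_mdifferentiable).congr fun z hz ↦ by
    simp [ofComplex_apply_of_im_pos hz, ← E₂_coe]

lemma differentiableOn_E₄ : DifferentiableOn ℂ E₄ upperHalfPlaneSet :=
  (UpperHalfPlane.mdifferentiable_iff.mp ModularForm.E₄.holo').congr fun z hz ↦ by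
    simpa [ofComplex_apply_of_im_pos hz] using E₄_coe ⟨z, hz⟩

lemma tendsto_E₂ : Tendsto E₂ I∞ (𝓝 1) := by
  simpa [E₂] using! ((tendsto_tsum_sigmaC 1).const_mul 24).const_sub 1

lemma tendsto_E₄ : Tendsto E₄ I∞ (𝓝 1) := by
  simpa [E₄] using! ((tendsto_tsum_sigmaC 3).const_mul 240).const_add 1

lemma differentiableOn_E₂_comp {φ : ℂ → ℂ} (hφ : Differentiable ℂ φ)
    (hpos : ∀ τ : ℂ, 0 < τ.im → 0 < (φ τ).im) :
    DifferentiableOn ℂ (fun τ ↦ E₂ (φ τ)) upperHalfPlaneSet :=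
  differentiableOn_E₂.comp hφ.differentiableOn hpos

lemma tendsto_E₂_comp {φ : ℂ → ℂ} {c : ℝ} (hc : 0 < c) (hφ : ∀ τ, (φ τ).im = c * τ.im) :
    Tendsto (fun τ ↦ E₂ (φ τ)) I∞ (𝓝 1) := by
  refine tendsto_E₂.comp (tendsto_comap_iff.mpr ?_)
  simpa [Function.comp_def, hφ] using! tendsto_comap.const_mul_atTop hc

lemma tendsto_E₂_two_mul : Tendsto (fun τ ↦ E₂ (2 * τ)) I∞ (𝓝 1) :=
  tendsto_E₂_comp two_pos (by simp)

lemma tendsto_E₂_div_two : Tendsto (fun τ ↦ E₂ (τ / 2)) I∞ (𝓝 1) :=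
  tendsto_E₂_comp one_half_pos (by simp [div_eq_inv_mul])

lemma tendsto_E₂_add_one_div_two : Tendsto (fun τ ↦ E₂ ((τ + 1) / 2)) I∞ (𝓝 1) :=
  tendsto_E₂_comp one_half_pos (by simp [div_eq_inv_mul])

lemma E₂_add_one (τ : ℂ) : E₂ (τ + 1) = E₂ τ := by simp only [E₂, qq_add_one]

lemma E₄_add_one (τ : ℂ) : E₄ (τ + 1) = E₄ τ := by simp only [E₄, qq_add_one]

lemma E₄_neg_one_div {τ : ℂ} (hτ : 0 < τ.im) : E₄ (-1 / τ) = τ ^ 4 * E₄ τ := by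
  have h : ((ModularForm.E₄ : ℍ → ℂ) ∣[(4 : ℤ)] S) ⟨τ, hτ⟩ = ModularForm.E₄ ⟨τ, hτ⟩ :=
    congrFun (ModularForm.E₄.slash_action_eq' _ ⟨S, rfl⟩) ⟨τ, hτ⟩
  have hτ0 : τ ≠ 0 := by rintro rfl; simp at hτ
  rw [SlashInvariantForm.slash_S_apply, ← E₄_coe, ← E₄_coe, UpperHalfPlane.coe_mk,
    UpperHalfPlane.coe_mk, zpow_neg, mul_inv_eq_iff_eq_mul₀ (zpow_ne_zero _ hτ0), inv_neg] at h
  rw [neg_div, one_div, h, mul_comm, zpow_ofNat]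

lemma E₂_smul (γ : SL(2, ℤ)) (z : ℍ) :
    E₂ ↑(γ • z) = denom γ z ^ 2 * E₂ z + 6 * γ 1 0 * denom γ z / (Real.pi * I) := by
  have h := congrFun (EisensteinSeries.E2_slash_action γ) z
  have hd : denom γ z ≠ 0 := denom_ne_zero γ z
  have hpi : (Real.pi : ℂ) ≠ 0 := by simp [Real.pi_ne_zero]
  rw [ModularForm.SL_slash_apply, Pi.sub_apply, Pi.smul_apply, EisensteinSeries.D2,
    ← E₂_coe, ← E₂_coe, riemannZeta_two, zpow_neg] at h
  simp only [smul_eq_mul] at h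
  field_simp at h ⊢
  linear_combination I * h - 6 * γ 1 0 * denom γ z * I_sq

lemma E₂_moebius {a b c d : ℤ} (hdet : a * d - b * c = 1) {τ : ℂ} (hτ : 0 < τ.im) :
    E₂ ((a * τ + b) / (c * τ + d)) =
      (c * τ + d) ^ 2 * E₂ τ + 6 * c * (c * τ + d) / (Real.pi * I) := by
  let γ : SL(2, ℤ) := ⟨!![a, b; c, d], by rw [Matrix.det_fin_two_of, hdet]⟩
  have h := E₂_smul γ ⟨τ, hτ⟩
  rw [ModularGroup.denom_apply, UpperHalfPlane.coe_specialLinearGroup_apply] at h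
  simpa [γ] using h

section Eisenstein

variable {τ : ℂ}

lemma E₂_neg_one_div (hτ : 0 < τ.im) :
    E₂ (-1 / τ) = τ ^ 2 * E₂ τ + 6 * τ / (Real.pi * I) := by
  simpa using E₂_moebius (a := 0) (b := -1) (c := 1) (d := 0) (by norm_num) hτ

lemma E₂_two_mul_neg_one_div (hτ : 0 < τ.im) :
    4 * E₂ (2 * (-1 / τ)) = τ ^ 2 * E₂ (τ / 2) + 12 * τ / (Real.pi * I) := by
  rw [show 2 * (-1 / τ) = -1 / (τ / 2) by field, E₂_neg_one_div (by simpa using hτ)]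
  ring

lemma E₂_neg_one_div_div_two (hτ : 0 < τ.im) :
    E₂ (-1 / τ / 2) = τ ^ 2 * (4 * E₂ (2 * τ)) + 12 * τ / (Real.pi * I) := by
  rw [show -1 / τ / 2 = -1 / (2 * τ) by field, E₂_neg_one_div (by simpa using hτ)]
  ring

lemma E₂_neg_one_div_add_one_div_two (hτ : 0 < τ.im) :
    E₂ ((-1 / τ + 1) / 2) = τ ^ 2 * E₂ ((τ + 1) / 2) + 12 * τ / (Real.pi * I) := by
  have hτ0 : τ ≠ 0 := by rintro rfl; simp at hτ
  have h := E₂_moebius (a := 1) (b := -1) (c := 2) (d := -1) (by norm_num)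
    (show 0 < ((τ + 1) / 2).im by simpa using hτ)
  have hden : 2 * ((τ + 1) / 2) - 1 = τ := by ring
  push_cast at h
  simp only [← sub_eq_add_neg, hden] at h
  rw [show (-1 / τ + 1) / 2 = (1 * ((τ + 1) / 2) - 1) / τ by field, h]
  ring

lemma E₂_hecke_two (hτ : 0 < τ.im) :
    4 * E₂ (2 * τ) + E₂ (τ / 2) + E₂ ((τ + 1) / 2) = 6 * E₂ τ := by
  rw [← sub_eq_zero]
  refine eq_zero_of_weight_lt_twelve (k := 2)
    (g := fun τ ↦ 4 * E₂ (2 * τ) + E₂ (τ / 2) + E₂ ((τ + 1) / 2) - 6 * E₂ τ) (by norm_num)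
    ?_ (fun τ _ ↦ ?_) (fun τ hτ ↦ ?_) ?_ hτ
  · exact ((((differentiableOn_E₂_comp (by fun_prop) (by simp)).const_mul 4).add
      (differentiableOn_E₂_comp (by fun_prop) (by simp))).add
      (differentiableOn_E₂_comp (by fun_prop) (by simp))).sub (differentiableOn_E₂.const_mul 6)
  · rw [show 2 * (τ + 1) = 2 * τ + 1 + 1 by ring, show (τ + 1 + 1) / 2 = τ / 2 + 1 by ring]
    simp only [E₂_add_one]
    ring
  · simp only [E₂_two_mul_neg_one_div hτ, E₂_neg_one_div_div_two hτ,
      E₂_neg_one_div_add_one_div_two hτ, E₂_neg_one_div hτ, zpow_ofNat]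
    ring
  · have h := (((tendsto_E₂_two_mul.const_mul 4).add tendsto_E₂_div_two).add
      tendsto_E₂_add_one_div_two).sub (tendsto_E₂.const_mul 6)
    convert h using 2
    norm_num

end Eisenstein

section CubeRoot

/-- The primitive cube root of unity `(-1 - (-1)ʲi√3)/2`, through which the coefficients of `f₁ j`
and its behaviour under `τ ↦ -1 / τ` are expressed. -/
noncomputable def ζ₃ (j : ℕ) : ℂ := (-1 - (-1) ^ j * I * Real.sqrt 3) / 2

/-- The elliptic point of order three `((-1)ʲ + i√3)/2`, at which `f₁ j` vanishes. -/
noncomputable def ellipticPoint (j : ℕ) : ℂ := ((-1) ^ j + I * Real.sqrt 3) / 2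

variable (j : ℕ)

lemma ofReal_sqrt_three_sq : (Real.sqrt 3 : ℂ) ^ 2 = 3 := by
  rw [← Complex.ofReal_pow, Real.sq_sqrt (by norm_num), Complex.ofReal_ofNat]

lemma neg_one_pow_sq : ((-1 : ℂ) ^ j) ^ 2 = 1 := by
  rw [← pow_mul, pow_mul', neg_one_sq, one_pow]

lemma I_mul_sqrt_three_sq : (I * Real.sqrt 3) ^ 2 = -3 := by
  rw [mul_pow, I_sq, ofReal_sqrt_three_sq, neg_one_mul]

lemma ζ₃_sq_add_ζ₃_add_one : ζ₃ j ^ 2 + ζ₃ j + 1 = 0 := by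
  rw [ζ₃]
  linear_combination (I * Real.sqrt 3) ^ 2 / 4 * neg_one_pow_sq j + I_mul_sqrt_three_sq / 4

lemma ζ₃_succ : ζ₃ (j + 1) = -1 - ζ₃ j := by
  rw [ζ₃, ζ₃, pow_succ]
  ring

lemma ζ₃_mul_ζ₃_succ : ζ₃ j * ζ₃ (j + 1) = 1 := by
  rw [ζ₃_succ]
  linear_combination -ζ₃_sq_add_ζ₃_add_one j

lemma ζ₃_ne_one : ζ₃ j ≠ 1 := by
  intro h
  have := ζ₃_sq_add_ζ₃_add_one j
  norm_num [h] at this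

lemma ellipticPoint_im_pos : 0 < (ellipticPoint j).im := by
  rcases neg_one_pow_eq_or ℂ j with h | h <;> simp [ellipticPoint, h]

lemma ellipticPoint_eq : ellipticPoint j = -((-1) ^ j * ζ₃ j) := by
  rw [ellipticPoint, ζ₃]
  linear_combination -(I * Real.sqrt 3) / 2 * neg_one_pow_sq j

lemma ellipticPoint_sq : ellipticPoint j ^ 2 = ζ₃ j ^ 2 := by
  rw [ellipticPoint_eq, neg_sq, mul_pow, neg_one_pow_sq, one_mul]

lemma neg_one_div_ellipticPoint : -1 / ellipticPoint j = ellipticPoint (j + 1) := by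
  have hne : ellipticPoint j ≠ 0 := fun h ↦ by simpa [h] using ellipticPoint_im_pos j
  rw [div_eq_iff hne, ellipticPoint_eq, ellipticPoint_eq, pow_succ]
  linear_combination ((-1) ^ j) ^ 2 * ζ₃_mul_ζ₃_succ j + neg_one_pow_sq j

end CubeRoot

section F₁

variable (j : ℕ) {τ : ℂ}

lemma f₁_eq (τ : ℂ) :
    f₁ j τ = 2 * E₂ τ - (1 - ζ₃ j) / 3 * E₂ (τ / 2) - (2 + ζ₃ j) / 3 * E₂ ((τ + 1) / 2) := by
  rw [f₁, ζ₃]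
  ring

lemma f₁_add_two (τ : ℂ) : f₁ (j + 2) τ = f₁ j τ := by simp [f₁, pow_add]

lemma f₁_add_one (τ : ℂ) : f₁ j (τ + 1) = f₁ (j + 1) τ := by
  rw [f₁_eq, f₁_eq, ζ₃_succ, show (τ + 1 + 1) / 2 = τ / 2 + 1 by ring, E₂_add_one, E₂_add_one]
  ring

lemma f₁_neg_one_div (hτ : 0 < τ.im) : f₁ j (-1 / τ) = ζ₃ j * τ ^ 2 * f₁ (j + 1) τ := by
  rw [f₁_eq, f₁_eq, ζ₃_succ, E₂_neg_one_div hτ, E₂_neg_one_div_div_two hτ,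
    E₂_neg_one_div_add_one_div_two hτ]
  linear_combination (-(1 - ζ₃ j) / 3 * τ ^ 2) * E₂_hecke_two hτ +
    τ ^ 2 * (E₂ (τ / 2) - E₂ ((τ + 1) / 2)) / 3 * ζ₃_sq_add_ζ₃_add_one j

lemma differentiableOn_f₁ : DifferentiableOn ℂ (f₁ j) upperHalfPlaneSet :=
  ((differentiableOn_E₂.const_mul 2).sub
    ((differentiableOn_E₂_comp (by fun_prop) (by simp)).const_mul _)).sub
    ((differentiableOn_E₂_comp (by fun_prop) (by simp)).const_mul _)

lemma tendsto_f₁ : Tendsto (f₁ j) I∞ (𝓝 1) := by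
  have h := ((tendsto_E₂.const_mul 2).sub
    (tendsto_E₂_div_two.const_mul ((1 - ζ₃ j) / 3))).sub
    (tendsto_E₂_add_one_div_two.const_mul ((2 + ζ₃ j) / 3))
  convert h using 2 with τ
  · exact f₁_eq j τ
  · ring

lemma f₁_mul_f₁_succ (hτ : 0 < τ.im) : f₁ j τ * f₁ (j + 1) τ = E₄ τ := by
  rw [← sub_eq_zero]
  refine eq_zero_of_weight_lt_twelve (k := 4) (g := fun τ ↦ f₁ j τ * f₁ (j + 1) τ - E₄ τ)
    (by norm_num) ?_ (fun τ _ ↦ ?_) (fun τ hτ ↦ ?_) ?_ hτ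
  · exact ((differentiableOn_f₁ j).mul (differentiableOn_f₁ (j + 1))).sub differentiableOn_E₄
  · simp only [f₁_add_one, f₁_add_two, E₄_add_one, mul_comm]
  · simp only [f₁_neg_one_div _ hτ, f₁_add_two, E₄_neg_one_div hτ, zpow_ofNat]
    linear_combination τ ^ 4 * f₁ j τ * f₁ (j + 1) τ * ζ₃_mul_ζ₃_succ j
  · simpa using ((tendsto_f₁ j).mul (tendsto_f₁ (j + 1))).sub tendsto_E₄

lemma f₁_succ_ellipticPoint_succ :
    f₁ (j + 1) (ellipticPoint (j + 1)) = f₁ j (ellipticPoint j) := by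
  rcases neg_one_pow_eq_or ℂ j with hj | hj
  · have : ellipticPoint (j + 1) + 1 = ellipticPoint j := by
      rw [ellipticPoint, ellipticPoint, pow_succ, hj]
      ring
    rw [← f₁_add_one, this]
  · have : ellipticPoint (j + 1) = ellipticPoint j + 1 := by
      rw [ellipticPoint, ellipticPoint, pow_succ, hj]
      ring
    rw [this, f₁_add_one, f₁_add_two]

lemma f₁_ellipticPoint : f₁ j (ellipticPoint j) = 0 := by
  have hfix : f₁ j (ellipticPoint j) = ζ₃ j * f₁ j (ellipticPoint j) :=
    calc f₁ j (ellipticPoint j) = f₁ (j + 1) (-1 / ellipticPoint j) := by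
          rw [neg_one_div_ellipticPoint, f₁_succ_ellipticPoint_succ]
      _ = ζ₃ (j + 1) * ζ₃ j ^ 2 * f₁ j (ellipticPoint j) := by
          rw [f₁_neg_one_div _ (ellipticPoint_im_pos j), ellipticPoint_sq, f₁_add_two]
      _ = ζ₃ j * f₁ j (ellipticPoint j) := by
          linear_combination ζ₃ j * f₁ j (ellipticPoint j) * ζ₃_mul_ζ₃_succ j
  exact by_contra fun h0 ↦ ζ₃_ne_one j ((right_eq_mul₀ h0).mp hfix)

end F₁

theorem stmt2 :
    (∀ τ : ℂ, 0 < τ.im → f₁ 0 τ * f₁ 1 τ = E₄ τ) ∧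
    (∀ j : ℕ, j < 2 → f₁ j (((-1 : ℂ) ^ j + Complex.I * Real.sqrt 3) / 2) = 0) :=
  ⟨fun _ hτ ↦ f₁_mul_f₁_succ 0 hτ, fun j _ ↦ f₁_ellipticPoint j⟩
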